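/- Let r ≥ 7 be an integer with gcd(6,r) = 1, let q ∈ ℤ, and let G = ⟨s₁, s₂, f | s₁² = f, s₂³ = f, (s₁s₂)^r = f^q⟩. Set g = s₁s₂s₁s₂⁻¹f⁻¹ and h = s₂⁻¹s₁s₂s₁f⁻¹. Then (Subgroup.closure {g,h}) ⊓ Subgroup.zpowers f = Subgroup.zpowers (f^{6q-5r}); consequently, (g,h) is a generating pair of G if and only if 6q - 5r = 1 or 6q - 5r = -1. -/

import Mathlib

/-!
Put `n = 6q - 5r`. Since `f` is central and `s₁² = s₂³ = f`, the elements `g` and `h` are the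
commutators `[s₁, s₂]` and `[s₂⁻¹, s₁]`. Conjugation by `s₁` inverts both of them, while conjugation
by `s₂` permutes `g`, `h`, `(hg)⁻¹` cyclically; hence `H = ⟨g, h⟩` is normal (`closure_pair_normal`).

In `G ⧸ H` the images of `s₁` and `s₂` commute, so with `t = s₁s₂⁻¹` one gets `s₁ = t³`, `s₂ = t²`,
`f = t⁶` and `tⁿ = 1` (`abelian_relations`). In particular `fⁿ ∈ H`, and `H = G` when `n = ±1`.

Conversely `s₁ ↦ 3`, `s₂ ↦ 2`, `f ↦ 6` defines a homomorphism `G → ℤ/n` (`toZMod`) that kills `g` and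
`h` and sends `t` to `1`. If `f^k ∈ H`, then `n ∣ 6k`, and `n ∣ k` because `gcd(6, r) = 1` makes `n`
coprime to `6`. If `H = G`, then `1 = 0` in `ℤ/n`, so `n = ±1`.
-/

/-- Relators of G = ⟨s₁,s₂,f | s₁² = f, s₂³ = f, (s₁s₂)^r = f^q⟩ on the generators
s₁ = of 0, s₂ = of 1, f = of 2. -/
def seifertRels (r : ℕ) (q : ℤ) : Set (FreeGroup (Fin 3)) :=
  {FreeGroup.of 0 ^ 2 * (FreeGroup.of 2)⁻¹,
   FreeGroup.of 1 ^ 3 * (FreeGroup.of 2)⁻¹,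
   (FreeGroup.of 0 * FreeGroup.of 1) ^ r * FreeGroup.of 2 ^ (-q)}

/-- The fundamental group of a Seifert manifold over S²(2,3,r). -/
abbrev Sft (r : ℕ) (q : ℤ) := PresentedGroup (seifertRels r q)

/-- The generator s₁. -/
def S₁ (r : ℕ) (q : ℤ) : Sft r q := PresentedGroup.of 0

/-- The generator s₂. -/
def S₂ (r : ℕ) (q : ℤ) : Sft r q := PresentedGroup.of 1

/-- The central element f (the class of the regular fiber). -/
def F (r : ℕ) (q : ℤ) : Sft r q := PresentedGroup.of 2

/-- Conjugation by `a` and `b` on `g = [a, b]` and `h = [b⁻¹, a]` when `a² = b³ = f`: the former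
inverts both, the latter permutes `g`, `h`, `(hg)⁻¹` cyclically. -/
lemma conj_identities {G : Type*} [Group G] {a b f : G} (ha : a ^ 2 = f) (hb : b ^ 3 = f) :
    let g := a * b * a * b⁻¹ * f⁻¹
    let h := b⁻¹ * a * b * a * f⁻¹
    (a * g * a⁻¹ = g⁻¹ ∧ a * h * a⁻¹ = h⁻¹) ∧ (a⁻¹ * g * a = g⁻¹ ∧ a⁻¹ * h * a = h⁻¹) ∧
    (b * g * b⁻¹ = (h * g)⁻¹ ∧ b * h * b⁻¹ = g) ∧ (b⁻¹ * g * b = h ∧ b⁻¹ * h * b = (h * g)⁻¹) := by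
  have haf : a * f = f * a := by rw [← ha]; group
  have hbf : b * f = f * b := by rw [← hb]; group
  have haf1 : ∀ x, a * (f * x) = f * (a * x) := fun x => by rw [← mul_assoc, haf, mul_assoc]
  have hbf1 : ∀ x, b * (f * x) = f * (b * x) := fun x => by rw [← mul_assoc, hbf, mul_assoc]
  have haf2 : a * f⁻¹ = f⁻¹ * a := by rw [← ha]; group
  have hbf2 : b * f⁻¹ = f⁻¹ * b := by rw [← hb]; group
  have haf3 : ∀ x, a * (f⁻¹ * x) = f⁻¹ * (a * x) := fun x => by rw [← mul_assoc, haf2, mul_assoc]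
  have hbf3 : ∀ x, b * (f⁻¹ * x) = f⁻¹ * (b * x) := fun x => by rw [← mul_assoc, hbf2, mul_assoc]
  have haa : a * a = f := by rw [← ha, pow_two]
  have hbb : b * (b * b) = f := by rw [← hb, pow_succ', pow_two]
  have haa1 : ∀ x, a * (a * x) = f * x := fun x => by rw [← mul_assoc, haa]
  have hbb1 : ∀ x, b * (b * (b * x)) = f * x := fun x => by rw [← hbb]; group
  have hai : a⁻¹ = f⁻¹ * a := by rw [← ha]; group
  have hbi : b⁻¹ = f⁻¹ * (b * b) := by rw [← hb]; group
  -- Normal form: a power of `f` followed by an alternating positive word in `a` and `b, b²`.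
  refine ⟨⟨?_, ?_⟩, ⟨?_, ?_⟩, ⟨?_, ?_⟩, ⟨?_, ?_⟩⟩ <;>
    simp only [mul_inv_rev, inv_inv, hai, hbi, mul_assoc, haf, hbf, haf1, hbf1, haf2, hbf2, haf3,
      hbf3, haa, hbb, haa1, hbb1, inv_mul_cancel_left,
      inv_mul_cancel, mul_one]

lemma closure_pair_normal {G : Type*} [Group G] {a b f : G} (ha : a ^ 2 = f) (hb : b ^ 3 = f)
    (hgen : Subgroup.closure {a, b} = ⊤) :
    (Subgroup.closure {a * b * a * b⁻¹ * f⁻¹, b⁻¹ * a * b * a * f⁻¹}).Normal := by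
  obtain ⟨⟨h1, h2⟩, ⟨h3, h4⟩, ⟨h5, h6⟩, ⟨h7, h8⟩⟩ := conj_identities ha hb
  set g := a * b * a * b⁻¹ * f⁻¹
  set h := b⁻¹ * a * b * a * f⁻¹
  have hg : g ∈ Subgroup.closure {g, h} := Subgroup.subset_closure (by simp)
  have hh : h ∈ Subgroup.closure {g, h} := Subgroup.subset_closure (by simp)
  have key : ∀ x : G, x * g * x⁻¹ ∈ Subgroup.closure {g, h} → x * h * x⁻¹ ∈ Subgroup.closure {g, h} →
      ∀ y ∈ Subgroup.closure {g, h}, x * y * x⁻¹ ∈ Subgroup.closure {g, h} := by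
    intro x hx1 hx2
    have : Subgroup.closure {g, h} ≤ (Subgroup.closure {g, h}).comap (MulAut.conj x).toMonoidHom := by
      rw [Subgroup.closure_le]
      rintro y (rfl | rfl)
      · simpa using hx1
      · simpa using hx2
    intro y hy
    simpa using this hy
  -- An element normalizes `⟨g, h⟩` once it and its inverse conjugate `g` and `h` into `⟨g, h⟩`.
  have key2 : ∀ x : G, x * g * x⁻¹ ∈ Subgroup.closure {g, h} → x * h * x⁻¹ ∈ Subgroup.closure {g, h} →
      x⁻¹ * g * x ∈ Subgroup.closure {g, h} → x⁻¹ * h * x ∈ Subgroup.closure {g, h} →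
      x ∈ Subgroup.normalizer (Subgroup.closure {g, h} : Set G) := by
    intro x hx1 hx2 hx3 hx4
    rw [Subgroup.mem_normalizer_iff]
    refine fun y => ⟨key x hx1 hx2 y, fun hy => ?_⟩
    have := key x⁻¹ (by simpa using hx3) (by simpa using hx4) _ hy
    simpa [mul_assoc] using this
  rw [← Subgroup.normalizer_eq_top_iff, eq_top_iff, ← hgen, Subgroup.closure_le]
  have hm := inv_mem (mul_mem hh hg)
  rintro x (rfl | rfl)
  · exact key2 _ (h1 ▸ inv_mem hg) (h2 ▸ inv_mem hh) (h3 ▸ inv_mem hg) (h4 ▸ inv_mem hh)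
  · exact key2 _ (h5 ▸ hm) (h6 ▸ hg) (h7 ▸ hh) (h8 ▸ hm)

/-- In a quotient of `G` where `s₁`, `s₂` commute, `t = s₁s₂⁻¹` generates and `t^(6q-5r) = 1`. -/
lemma abelian_relations {Q : Type*} [Group Q] {a b f : Q} {r : ℕ} {q : ℤ} (ha : a ^ 2 = f)
    (hb : b ^ 3 = f) (hr : (a * b) ^ r = f ^ q) (hab : Commute a b) :
    a = (a * b⁻¹) ^ 3 ∧ b = (a * b⁻¹) ^ 2 ∧ (a * b⁻¹) ^ (6 * q - 5 * (r : ℤ)) = 1 := by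
  have hA : a = (a * b⁻¹) ^ 3 := by
    rw [hab.inv_right.mul_pow, inv_pow, hb, ← ha]; group
  have hB : b = (a * b⁻¹) ^ 2 := by
    rw [hab.inv_right.mul_pow, ha, ← hb]; group
  refine ⟨hA, hB, ?_⟩
  generalize a * b⁻¹ = t at hA hB
  subst hA hB
  rw [← ha] at hr
  rw [zpow_sub, mul_inv_eq_one]
  have e1 : (t ^ 3 * t ^ 2) ^ r = t ^ (5 * (r : ℤ)) := by
    rw [← pow_add, ← pow_mul, ← zpow_natCast]; push_cast; rfl
  have e2 : ((t ^ 3) ^ 2) ^ q = t ^ (6 * q) := by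
    rw [← pow_mul, ← zpow_natCast, ← zpow_mul]; push_cast; rfl
  rw [← e1, ← e2, hr]

section Presentation

variable (r : ℕ) (q : ℤ)

lemma S₁_sq : S₁ r q ^ 2 = F r q := by
  rw [← mul_inv_eq_one]
  exact PresentedGroup.one_of_mem (rels := seifertRels r q) (by simp [seifertRels])

lemma S₂_cube : S₂ r q ^ 3 = F r q := by
  rw [← mul_inv_eq_one]
  exact PresentedGroup.one_of_mem (rels := seifertRels r q) (by simp [seifertRels])

lemma S₁_mul_S₂_pow : (S₁ r q * S₂ r q) ^ r = F r q ^ q := by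
  rw [← mul_inv_eq_one, ← zpow_neg]
  exact PresentedGroup.one_of_mem (rels := seifertRels r q)
    (x := (FreeGroup.of 0 * FreeGroup.of 1) ^ r * FreeGroup.of 2 ^ (-q)) (by simp [seifertRels])

lemma closure_S₁_S₂ : Subgroup.closure {S₁ r q, S₂ r q} = ⊤ := by
  rw [eq_top_iff, ← PresentedGroup.closure_range_of, Subgroup.closure_le]
  have h1 : S₁ r q ∈ Subgroup.closure {S₁ r q, S₂ r q} := Subgroup.subset_closure (by simp)
  rintro _ ⟨i, rfl⟩
  fin_cases i
  · exact h1
  · exact Subgroup.subset_closure (Set.mem_insert_of_mem _ rfl)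
  · exact (S₁_sq r q ▸ pow_mem h1 2 : F r q ∈ Subgroup.closure {S₁ r q, S₂ r q})

/-- The abelianization map `G → ℤ/(6q-5r)`, given by `s₁ ↦ 3`, `s₂ ↦ 2`, `f ↦ 6`. -/
def toZMod : Sft r q →* Multiplicative (ZMod (6 * q - 5 * (r : ℤ)).natAbs) :=
  PresentedGroup.toGroup (f := ![.ofAdd 3, .ofAdd 2, .ofAdd 6]) <| by
    have hn : (6 * q - 5 * r : ZMod (6 * q - 5 * (r : ℤ)).natAbs) = 0 := by
      have := (ZMod.intCast_zmod_eq_zero_iff_dvd (6 * q - 5 * (r : ℤ))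
        (6 * q - 5 * (r : ℤ)).natAbs).2 (Int.natAbs_dvd.2 dvd_rfl)
      push_cast at this
      exact this
    rintro x (rfl | rfl | rfl)
    all_goals
      apply Multiplicative.toAdd.injective
      simp
    · norm_num
    · norm_num
    · linear_combination -hn

lemma toZMod_S₁ : toZMod r q (S₁ r q) = .ofAdd 3 := PresentedGroup.toGroup.of _

lemma toZMod_S₂ : toZMod r q (S₂ r q) = .ofAdd 2 := PresentedGroup.toGroup.of _

lemma toZMod_F : toZMod r q (F r q) = .ofAdd 6 := PresentedGroup.toGroup.of _

end Presentation

theorem stmt15 (r : ℕ) (hr : 7 ≤ r) (hgcd : Nat.gcd 6 r = 1) (q : ℤ) :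
    let g := S₁ r q * S₂ r q * S₁ r q * (S₂ r q)⁻¹ * (F r q)⁻¹
    let h := (S₂ r q)⁻¹ * S₁ r q * S₂ r q * S₁ r q * (F r q)⁻¹
    Subgroup.closure {g, h} ⊓ Subgroup.zpowers (F r q) =
      Subgroup.zpowers (F r q ^ (6 * q - 5 * (r : ℤ))) ∧
    (Subgroup.closure {g, h} = ⊤ ↔ 6 * q - 5 * (r : ℤ) = 1 ∨ 6 * q - 5 * (r : ℤ) = -1) := by
  intro g h
  have hN : (Subgroup.closure {g, h}).Normal :=
    closure_pair_normal (S₁_sq r q) (S₂_cube r q) (closure_S₁_S₂ r q)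
  have hker : Subgroup.closure {g, h} ≤ (toZMod r q).ker := by
    rw [Subgroup.closure_le]
    rintro x (rfl | rfl) <;>
    · apply Multiplicative.toAdd.injective
      simp only [g, h, map_mul, map_inv, toZMod_S₁, toZMod_S₂, toZMod_F, toAdd_mul, toAdd_inv,
        toAdd_ofAdd, toAdd_one]
      ring
  have hgmem : g ∈ Subgroup.closure {g, h} := Subgroup.subset_closure (by simp)
  set H := Subgroup.closure {g, h}
  set π := QuotientGroup.mk' H
  have e1 : π (S₁ r q) ^ 2 = π (F r q) := by rw [← map_pow, S₁_sq]
  have e2 : π (S₂ r q) ^ 3 = π (F r q) := by rw [← map_pow, S₂_cube]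
  have e3 : (π (S₁ r q) * π (S₂ r q)) ^ r = π (F r q) ^ q := by
    rw [← map_mul, ← map_pow, S₁_mul_S₂_pow, map_zpow]
  have hcomm : Commute (π (S₁ r q)) (π (S₂ r q)) := by
    have hg1 : π g = 1 := (QuotientGroup.eq_one_iff g).2 hgmem
    simp only [g, map_mul, map_inv] at hg1
    -- `g = 1` reads `s₁s₂s₁s₂⁻¹ = s₁²`, where `f` has been replaced by `s₁²`.
    rw [mul_inv_eq_one, ← e1, mul_inv_eq_iff_eq_mul, pow_two, mul_assoc, mul_assoc,
      mul_left_cancel_iff] at hg1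
    exact hg1.symm
  obtain ⟨hA, hB, hT⟩ := abelian_relations e1 e2 e3 hcomm
  constructor
  · apply le_antisymm
    · rintro x ⟨hx, k, rfl⟩
      have h6 := hker hx
      rw [MonoidHom.mem_ker] at h6
      have h6' := congrArg Multiplicative.toAdd h6
      simp only [map_zpow, toZMod_F, toAdd_zpow, toAdd_ofAdd, toAdd_one, zsmul_eq_mul] at h6'
      have hdvd : (6 * q - 5 * (r : ℤ)) ∣ k * 6 := by
        rw [← Int.natAbs_dvd, ← ZMod.intCast_zmod_eq_zero_iff_dvd]
        push_cast
        exact h6'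
      have hr6 : IsCoprime (r : ℤ) 6 := by
        exact_mod_cast Nat.isCoprime_iff_coprime.2 (Nat.Coprime.symm hgcd)
      have hcop : IsCoprime (6 * q - 5 * (r : ℤ)) 6 := by
        obtain ⟨u, v, huv⟩ := hr6
        exact ⟨u, v + u * r - u * q, by linear_combination huv⟩
      obtain ⟨m, rfl⟩ := hcop.dvd_of_dvd_mul_right hdvd
      exact ⟨m, by simp only [zpow_mul]⟩
    · rw [Subgroup.zpowers_le]
      refine ⟨(QuotientGroup.eq_one_iff _).1 (?_ : π _ = 1), ⟨_, rfl⟩⟩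
      rw [map_zpow, ← e1, hA, ← pow_mul, ← zpow_natCast, ← zpow_mul, mul_comm, zpow_mul, hT,
        one_zpow]
  · constructor
    · intro htop
      have h1 := hker (htop ▸ Subgroup.mem_top (S₁ r q * (S₂ r q)⁻¹))
      rw [MonoidHom.mem_ker] at h1
      have h1' := congrArg Multiplicative.toAdd h1
      simp only [map_mul, map_inv, toZMod_S₁, toZMod_S₂, toAdd_mul, toAdd_inv, toAdd_ofAdd,
        toAdd_one] at h1'
      have hdvd : (6 * q - 5 * (r : ℤ)) ∣ 1 := by
        rw [← Int.natAbs_dvd, ← ZMod.intCast_zmod_eq_zero_iff_dvd]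
        push_cast
        linear_combination h1'
      exact Int.isUnit_iff.1 (isUnit_of_dvd_one hdvd)
    · intro hn
      have hT1 : π (S₁ r q) * (π (S₂ r q))⁻¹ = 1 := by
        rcases hn with hn | hn <;> simpa only [hn, zpow_one, zpow_neg, inv_eq_one] using hT
      rw [hT1, one_pow] at hA hB
      rw [eq_top_iff, ← closure_S₁_S₂, Subgroup.closure_le]
      rintro x (rfl | rfl)
      · exact (QuotientGroup.eq_one_iff _).1 hA
      · exact (QuotientGroup.eq_one_iff _).1 hB
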